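/- Let X be a topological space, A an index set, and μ_α : X → ℝ (α ∈ A) a family of continuous nonnegative functions whose family of supports ({x : μ_α(x) ≠ 0})_{α ∈ A} is locally finite. Then for every finite subset F ⊆ A the set U(F) is open in X. -/

import Mathlib

/-- For a family of real-valued functions `μ_α : X → ℝ` and a finite subset `F ⊆ A`,
`U F = {x ∈ X : μ_β(x) < μ_α(x) for all α ∈ F and all β ∉ F}`. -/
def setU {X A : Type*} (μ : A → X → ℝ) (F : Finset A) : Set X :=
  {x | ∀ α ∈ F, ∀ β ∉ F, μ β x < μ α x}

/-!
Every point has a neighbourhood on which all but finitely many of the functions vanish, so that the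
family agrees there with one that has only finitely many distinct members: some of the original
functions and the zero function. For such a family the infinitely many inequalities defining `U(F)`
are finitely many distinct inequalities between continuous functions.
-/

open Filter Set Topology

section

variable {X A R : Type*} [TopologicalSpace X]

theorem exists_finite_range_eventually_eq_of_locallyFinite_support [Zero R]
    {f : A → X → R} (hf : LocallyFinite fun α => Function.support (f α)) (x : X) :
    ∃ g : A → X → R, (range g).Finite ∧ (∀ α, g α = f α ∨ g α = 0) ∧
      ∀ᶠ y in 𝓝 x, ∀ α, g α y = f α y := by
  classical
  obtain ⟨N, hN, hfin⟩ := hf x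
  set J : Set A := {α | (Function.support (f α) ∩ N).Nonempty}
  refine ⟨J.piecewise f 0, ?_, fun α => ?_, ?_⟩
  · rw [range_piecewise]
    exact (hfin.image f).union ((finite_singleton 0).subset (image_subset_iff.2 fun _ _ => rfl))
  · by_cases hα : α ∈ J <;> simp [hα]
  · filter_upwards [hN] with y hy α
    by_cases hα : α ∈ J
    · rw [piecewise_eq_of_mem _ _ _ hα]
    · have hzero : f α y = 0 := by
        by_contra hne
        exact hα ⟨y, hne, hy⟩
      rw [piecewise_eq_of_notMem _ _ _ hα, hzero, Pi.zero_apply, Pi.zero_apply]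

variable [TopologicalSpace R] [LinearOrder R] [OrderClosedTopology R]

theorem isOpen_setOf_forall_lt_of_finite {S T : Set (X → R)} (hS : S.Finite) (hT : T.Finite)
    (hScont : ∀ p ∈ S, Continuous p) (hTcont : ∀ q ∈ T, Continuous q) :
    IsOpen {x | ∀ p ∈ S, ∀ q ∈ T, q x < p x} := by
  simp only [ofPred_forall]
  exact hS.isOpen_biInter fun p hp => hT.isOpen_biInter fun q hq =>
    isOpen_lt (hTcont q hq) (hScont p hp)

theorem setU_isOpen_general [Zero R] {μ : A → X → R} (hcont : ∀ α, Continuous (μ α))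
    (hlf : LocallyFinite fun α => Function.support (μ α)) (F : Set A) :
    IsOpen {x | ∀ α ∈ F, ∀ β ∉ F, μ β x < μ α x} := by
  refine isOpen_iff_eventually.2 fun x hx => ?_
  obtain ⟨g, hfin, hg, hgμ⟩ := exists_finite_range_eventually_eq_of_locallyFinite_support hlf x
  have hgcont (α : A) : Continuous (g α) := by
    rcases hg α with h | h <;> rw [h]
    exacts [hcont α, continuous_zero]
  have hopen : IsOpen {y | ∀ α ∈ F, ∀ β ∉ F, g β y < g α y} := by
    simpa only [forall_mem_image, mem_compl_iff] using isOpen_setOf_forall_lt_of_finite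
      (hfin.subset (image_subset_range g F)) (hfin.subset (image_subset_range g Fᶜ))
      (forall_mem_image.2 fun α _ => hgcont α) (forall_mem_image.2 fun β _ => hgcont β)
  have hgx : ∀ α ∈ F, ∀ β ∉ F, g β x < g α x := by
    simpa only [hgμ.self_of_nhds, mem_ofPred_eq] using hx
  filter_upwards [hopen.mem_nhds hgx, hgμ] with y hy hgμy
  simpa only [hgμy, mem_ofPred_eq] using hy

end

/-- If the `μ_α` are continuous nonnegative functions on a topological space `X`
whose family of supports is locally finite, then `U(F)` is open for every finite
`F ⊆ A`. -/
theorem setU_isOpen {X A : Type*} [TopologicalSpace X] (μ : A → X → ℝ)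
    (hcont : ∀ α, Continuous (μ α))
    (hnonneg : ∀ α x, 0 ≤ μ α x)
    (hlf : LocallyFinite fun α => {x | μ α x ≠ 0}) :
    ∀ F : Finset A, IsOpen (setU μ F) := by
  intro F
  exact setU_isOpen_general hcont hlf (F : Set A)
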